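/- Suppose AADMM is run with parameters α_t ≡ 1, θ_t = τ_t = ρ_t ≡ ρ for some ρ > 0, and η_t ≡ η for some η ≥ L_G + χρ‖K‖². Then for every t ≥ 1, the averages x^{t+1} := (1/t)Σ_{i=2}^{t+1}x_i and w^{t+1} := (1/t)Σ_{i=2}^{t+1}w_i satisfy: (i) G(x^{t+1}) + F(w^{t+1}) − f* ≤ (1/(2t))(ηD_{x*}² + ρ(1−χ)D_{x*,K}²); and (ii) ‖Bw^{t+1} − Kx^{t+1} − b‖² ≤ (2/t²)(2D_{y*}²/ρ² + ηD_{x*}²/ρ + (1−χ)D_{x*,K}²). -/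

import Mathlib

open RealInnerProductSpace

lemma aux_lim (A C : ℝ) (h : ∀ s : ℝ, 0 < s → s ≤ 1 → 0 ≤ s * A + s ^ 2 * C) : 0 ≤ A := by
  by_contra hA
  push Not at hA
  have h1 := h 1 one_pos le_rfl
  have hC : 0 < C := by nlinarith
  have hs : 0 < min 1 (-A / (2 * C)) := lt_min one_pos (by apply div_pos <;> linarith)
  have h2 := h _ hs (min_le_left _ _)
  have h3 : min 1 (-A / (2 * C)) * C ≤ -A / 2 := by
    calc _ ≤ (-A / (2 * C)) * C := mul_le_mul_of_nonneg_right (min_le_right _ _) hC.le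
      _ = -A / 2 := by field_simp
  nlinarith

lemma aux_grad {V : Type*} [NormedAddCommGroup V] [InnerProductSpace ℝ V] [CompleteSpace V]
    (G : V → ℝ) (g p u : V) (hg : HasGradientAt G g p) (hG : ConvexOn ℝ Set.univ G) :
    G p + ⟪g, u - p⟫ ≤ G u := by
  have hd : HasDerivAt (fun s : ℝ => G (AffineMap.lineMap p u s)) ⟪g, u - p⟫ 0 := by
    have h1 : HasDerivAt (fun s : ℝ => AffineMap.lineMap p u s) (u - p) 0 :=
      AffineMap.hasDerivAt_lineMap
    have h2 := hg.hasFDerivAt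
    have h3 : HasFDerivAt G (InnerProductSpace.toDual ℝ V g) (AffineMap.lineMap p u (0:ℝ)) := by
      simpa using h2
    have := h3.comp_hasDerivAt (0:ℝ) h1
    simp only [AffineMap.lineMap_apply_zero, InnerProductSpace.toDual_apply_apply] at this
    exact this
  have hc : ConvexOn ℝ Set.univ (fun s : ℝ => G (AffineMap.lineMap p u s)) := by
    exact hG.comp_affineMap (AffineMap.lineMap p u : ℝ →ᵃ[ℝ] V)
  have := hc.le_slope_of_hasDerivAt (Set.mem_univ 0) (Set.mem_univ 1) one_pos hd
  simp [slope] at this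
  linarith

lemma aux_x {𝒳 𝒴 : Type*} [NormedAddCommGroup 𝒳] [InnerProductSpace ℝ 𝒳]
    [NormedAddCommGroup 𝒴] [InnerProductSpace ℝ 𝒴] (X : Set 𝒳) (hX : Convex ℝ X)
    (K : 𝒳 →L[ℝ] 𝒴) (g x0 x1 xs : 𝒳) (c r y : 𝒴) (k m e : ℝ) (hx1 : x1 ∈ X) (hxs : xs ∈ X)
    (h : ∀ u ∈ X, ⟪g, x1⟫ - k * ⟪r, K x1⟫ + m / 2 * ‖c - K x1‖ ^ 2 + ⟪y, K x1⟫
        + e / 2 * ‖x1 - x0‖ ^ 2 ≤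
      ⟪g, u⟫ - k * ⟪r, K u⟫ + m / 2 * ‖c - K u‖ ^ 2 + ⟪y, K u⟫ + e / 2 * ‖u - x0‖ ^ 2) :
    0 ≤ ⟪g, xs - x1⟫ - k * ⟪r, K (xs - x1)⟫ - m * ⟪c - K x1, K (xs - x1)⟫ + ⟪y, K (xs - x1)⟫
      + e * ⟪x1 - x0, xs - x1⟫ := by
  apply aux_lim _ (m / 2 * ‖K (xs - x1)‖ ^ 2 + e / 2 * ‖xs - x1‖ ^ 2)
  intro s hs hs1
  have h1 := h (x1 + s • (xs - x1)) (hX.add_smul_sub_mem hx1 hxs ⟨hs.le, hs1⟩)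
  have e1 : c - K (x1 + s • (xs - x1)) = (c - K x1) - s • K (xs - x1) := by
    rw [map_add, map_smul]; abel
  have e2 : x1 + s • (xs - x1) - x0 = (x1 - x0) + s • (xs - x1) := by abel
  rw [e1, e2, norm_sub_sq_real (c - K x1), norm_add_sq_real] at h1
  rw [map_add, map_smul] at h1
  simp only [inner_add_right, inner_smul_right, norm_smul, mul_pow, Real.norm_eq_abs, sq_abs] at h1
  linarith

lemma aux_w {𝒲 𝒴 : Type*} [NormedAddCommGroup 𝒲] [InnerProductSpace ℝ 𝒲]
    [NormedAddCommGroup 𝒴] [InnerProductSpace ℝ 𝒴]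
    (F : 𝒲 → ℝ) (hF : ConvexOn ℝ Set.univ F)
    (B : 𝒲 →L[ℝ] 𝒴) (w1 ws : 𝒲) (c d y : 𝒴) (m : ℝ)
    (h : ∀ u, F w1 - ⟪y, B w1⟫ + m / 2 * ‖B w1 - c - d‖ ^ 2 ≤
      F u - ⟪y, B u⟫ + m / 2 * ‖B u - c - d‖ ^ 2) :
    0 ≤ F ws - F w1 - ⟪y, B (ws - w1)⟫ + m * ⟪B w1 - c - d, B (ws - w1)⟫ := by
  apply aux_lim _ (m / 2 * ‖B (ws - w1)‖ ^ 2)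
  intro s hs hs1
  have h1 := h (w1 + s • (ws - w1))
  have e1 : B (w1 + s • (ws - w1)) - c - d = (B w1 - c - d) + s • B (ws - w1) := by
    rw [map_add, map_smul]; abel
  have h2 := hF.2 (Set.mem_univ w1) (Set.mem_univ ws) (by linarith : 0 ≤ 1 - s) hs.le (by ring)
  have e2 : (1 - s) • w1 + s • ws = w1 + s • (ws - w1) := by module
  rw [e2] at h2
  rw [e1, norm_add_sq_real] at h1
  rw [map_add, map_smul] at h1
  simp only [inner_add_right, inner_smul_right, norm_smul, mul_pow, Real.norm_eq_abs, sq_abs, smul_eq_mul] at h1 h2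
  linarith

lemma aux_core {𝒳 𝒴 : Type*} [NormedAddCommGroup 𝒳] [InnerProductSpace ℝ 𝒳]
    [NormedAddCommGroup 𝒴] [InnerProductSpace ℝ 𝒴]
    (e0 e1 : 𝒳) (q0 q1 r0 r1 y0 y1 y : 𝒴) (D gx L ρ η χ κ : ℝ) (hχ : χ = 0 ∨ χ = 1)
    (hρ : 0 < ρ) (hη : L + χ * ρ * κ ^ 2 ≤ η) (hK : ‖q1 - q0‖ ^ 2 ≤ κ ^ 2 * ‖e1 - e0‖ ^ 2)
    (hy : y1 = y0 - ρ • r1)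
    (hD : D ≤ gx + L / 2 * ‖e1 - e0‖ ^ 2 + ⟪y0, r1 + q1⟫ - ρ * ⟪r1, r1 + q1⟫)
    (hg : gx ≤ χ * ρ * ⟪r0, q1⟫ + (1 - χ) * ρ * ⟪r0 + q0 - q1, q1⟫ - ⟪y0, q1⟫ - η * ⟪e1 - e0, e1⟫) :
    D - ⟪y, r1⟫ ≤
      (1 / (2 * ρ) * ‖y - y0‖ ^ 2 + η / 2 * ‖e0‖ ^ 2 + ρ / 2 * ‖r0 + q0‖ ^ 2 - χ * ρ / 2 * ‖q0‖ ^ 2)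
      - (1 / (2 * ρ) * ‖y - y1‖ ^ 2 + η / 2 * ‖e1‖ ^ 2 + ρ / 2 * ‖r1 + q1‖ ^ 2 - χ * ρ / 2 * ‖q1‖ ^ 2) := by
  have hyy : 1 / (2 * ρ) * ‖y - y1‖ ^ 2 = 1 / (2 * ρ) * ‖y - y0‖ ^ 2 + ⟪y, r1⟫ - ⟪y0, r1⟫ + ρ / 2 * ‖r1‖ ^ 2 := by
    have : y - y1 = (y - y0) + ρ • r1 := by rw [hy]; abel
    rw [this, norm_add_sq_real]
    simp only [inner_sub_left, inner_smul_right, norm_smul, mul_pow, Real.norm_eq_abs, sq_abs]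
    field_simp
    ring
  rw [hyy]
  have hE : 0 ≤ ‖e1 - e0‖ ^ 2 := sq_nonneg _
  have hm := mul_le_mul_of_nonneg_right hη hE
  have hρK := mul_le_mul_of_nonneg_left hK hρ.le
  rcases hχ with rfl | rfl
  · have hsq : 0 ≤ ρ * ‖r0 + q0 - q1‖ ^ 2 := by positivity
    simp only [← real_inner_self_eq_norm_sq, inner_add_left, inner_add_right, inner_sub_left, inner_sub_right] at *
    simp only [real_inner_comm e0 e1, real_inner_comm q0 q1, real_inner_comm r0 q0, real_inner_comm r0 q1,
      real_inner_comm r1 q1, real_inner_comm r0 r1, real_inner_comm r1 q0] at *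
    nlinarith
  · have hsq : 0 ≤ ρ * ‖r0 - (q1 - q0)‖ ^ 2 := by positivity
    simp only [← real_inner_self_eq_norm_sq, inner_add_left, inner_add_right, inner_sub_left, inner_sub_right] at *
    simp only [real_inner_comm e0 e1, real_inner_comm q0 q1, real_inner_comm r0 q0, real_inner_comm r0 q1,
      real_inner_comm r1 q1, real_inner_comm r0 r1, real_inner_comm r1 q0] at *
    nlinarith

lemma aux_jensen {V : Type*} [AddCommGroup V] [Module ℝ V] (f : V → ℝ)
    (hf : ConvexOn ℝ Set.univ f) (u : ℕ → V) (t : ℕ) (ht : 1 ≤ t) :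
    t * f ((t : ℝ)⁻¹ • ∑ i ∈ Finset.Icc 2 (t + 1), u i) ≤ ∑ i ∈ Finset.Icc 2 (t + 1), f (u i) := by
  have h0 : (0:ℝ) < t := by exact_mod_cast ht
  have := hf.map_sum_le (t := Finset.Icc 2 (t + 1)) (w := fun _ => (t:ℝ)⁻¹) (p := u)
    (fun _ _ => by positivity) (by simp; field_simp) (fun _ _ => Set.mem_univ _)
  rw [← Finset.smul_sum, ← Finset.smul_sum, smul_eq_mul] at this
  calc _ ≤ (t:ℝ) * ((t:ℝ)⁻¹ * _) := mul_le_mul_of_nonneg_left this h0.le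
    _ = _ := by field_simp

theorem stmt_13
    {𝒲 𝒳 𝒴 : Type*}
    [NormedAddCommGroup 𝒲] [InnerProductSpace ℝ 𝒲] [FiniteDimensional ℝ 𝒲]
    [NormedAddCommGroup 𝒳] [InnerProductSpace ℝ 𝒳] [FiniteDimensional ℝ 𝒳]
    [NormedAddCommGroup 𝒴] [InnerProductSpace ℝ 𝒴] [FiniteDimensional ℝ 𝒴]
    (X : Set 𝒳) (hXclosed : IsClosed X) (hXconv : Convex ℝ X)
    (G : 𝒳 → ℝ) (G' : 𝒳 → 𝒳) (hGgrad : ∀ p, HasGradientAt G (G' p) p)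
    (hGconv : ConvexOn ℝ Set.univ G)
    (L_G : ℝ) (hLG : 0 < L_G)
    (hGsmooth : ∀ x₁ ∈ X, ∀ x₂ ∈ X,
      G x₂ - G x₁ - ⟪G' x₁, x₂ - x₁⟫ ≤ L_G / 2 * ‖x₂ - x₁‖ ^ 2)
    (F : 𝒲 → ℝ) (hFconv : ConvexOn ℝ Set.univ F) (hFlsc : LowerSemicontinuous F)
    (K : 𝒳 →L[ℝ] 𝒴) (B : 𝒲 →L[ℝ] 𝒴) (b : 𝒴)
    (ws : 𝒲) (xs : 𝒳) (ys : 𝒴) (hxs : xs ∈ X)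
    (hsaddle₁ : ∀ yv : 𝒴,
      G xs + F ws - ⟪yv, B ws - K xs - b⟫ ≤ G xs + F ws - ⟪ys, B ws - K xs - b⟫)
    (hsaddle₂ : ∀ wv : 𝒲, ∀ xv ∈ X,
      G xs + F ws - ⟪ys, B ws - K xs - b⟫ ≤ G xv + F wv - ⟪ys, B wv - K xv - b⟫)
    (χ : ℝ) (hχ : χ = 0 ∨ χ = 1)
    (α η θ τ ρ : ℕ → ℝ)
    (hα : ∀ t, 1 ≤ t → 0 < α t ∧ α t ≤ 1)
    (hη : ∀ t, 1 ≤ t → 0 < η t) (hθ : ∀ t, 1 ≤ t → 0 ≤ θ t)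
    (hτ : ∀ t, 1 ≤ t → 0 < τ t) (hρ : ∀ t, 1 ≤ t → 0 < ρ t)
    (x xag xmd : ℕ → 𝒳) (w wag : ℕ → 𝒲) (y yag : ℕ → 𝒴)
    (hx1 : x 1 ∈ X) (hw1 : B (w 1) = K (x 1) + b) (hy1 : y 1 = 0)
    (hxag1 : xag 1 = x 1) (hwag1 : wag 1 = w 1) (hyag1 : yag 1 = y 1)
    (hxmd : ∀ t, 1 ≤ t → xmd t = (1 - α t) • xag t + α t • x t)
    (hxmem : ∀ t, 1 ≤ t → x (t + 1) ∈ X)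
    (hxstep : ∀ t, 1 ≤ t → ∀ u ∈ X,
      ⟪G' (xmd t), x (t + 1)⟫ - χ * θ t * ⟪B (w t) - K (x t) - b, K (x (t + 1))⟫
        + (1 - χ) * θ t / 2 * ‖B (w t) - K (x (t + 1)) - b‖ ^ 2
        + ⟪y t, K (x (t + 1))⟫ + η t / 2 * ‖x (t + 1) - x t‖ ^ 2
      ≤ ⟪G' (xmd t), u⟫ - χ * θ t * ⟪B (w t) - K (x t) - b, K u⟫
        + (1 - χ) * θ t / 2 * ‖B (w t) - K u - b‖ ^ 2
        + ⟪y t, K u⟫ + η t / 2 * ‖u - x t‖ ^ 2)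
    (hxagstep : ∀ t, 1 ≤ t → xag (t + 1) = (1 - α t) • xag t + α t • x (t + 1))
    (hwstep : ∀ t, 1 ≤ t → ∀ u : 𝒲,
      F (w (t + 1)) - ⟪y t, B (w (t + 1))⟫ + τ t / 2 * ‖B (w (t + 1)) - K (x (t + 1)) - b‖ ^ 2
      ≤ F u - ⟪y t, B u⟫ + τ t / 2 * ‖B u - K (x (t + 1)) - b‖ ^ 2)
    (hwagstep : ∀ t, 1 ≤ t → wag (t + 1) = (1 - α t) • wag t + α t • w (t + 1))
    (hystep : ∀ t, 1 ≤ t → y (t + 1) = y t - ρ t • (B (w (t + 1)) - K (x (t + 1)) - b))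
    (hyagstep : ∀ t, 1 ≤ t → yag (t + 1) = (1 - α t) • yag t + α t • y (t + 1))
    (ρv ηv : ℝ) (hρv : 0 < ρv) (hηv : L_G + χ * ρv * ‖K‖ ^ 2 ≤ ηv)
    (hαdef : ∀ t, 1 ≤ t → α t = 1)
    (hθdef : ∀ t, 1 ≤ t → θ t = ρv) (hτdef : ∀ t, 1 ≤ t → τ t = ρv)
    (hρdef : ∀ t, 1 ≤ t → ρ t = ρv)
    (hηdef : ∀ t, 1 ≤ t → η t = ηv) :
    ∀ t : ℕ, 1 ≤ t →
      (G ((t : ℝ)⁻¹ • ∑ i ∈ Finset.Icc 2 (t + 1), x i) + F ((t : ℝ)⁻¹ • ∑ i ∈ Finset.Icc 2 (t + 1), w i) - (G xs + F ws)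
        ≤ 1 / (2 * (t : ℝ)) * (ηv * ‖x 1 - xs‖ ^ 2 + ρv * (1 - χ) * ‖K (x 1 - xs)‖ ^ 2)) ∧
      ‖B ((t : ℝ)⁻¹ • ∑ i ∈ Finset.Icc 2 (t + 1), w i) - K ((t : ℝ)⁻¹ • ∑ i ∈ Finset.Icc 2 (t + 1), x i) - b‖ ^ 2
        ≤ 2 / (t : ℝ) ^ 2 * (2 * ‖y 1 - ys‖ ^ 2 / ρv ^ 2 + ηv * ‖x 1 - xs‖ ^ 2 / ρv
            + (1 - χ) * ‖K (x 1 - xs)‖ ^ 2) := by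
  have hr0 : B ws - K xs - b = 0 := by
    have h := hsaddle₁ (ys - (B ws - K xs - b))
    rw [inner_sub_left, real_inner_self_eq_norm_sq] at h
    have : ‖B ws - K xs - b‖ ^ 2 ≤ 0 := by linarith
    have h2 : ‖B ws - K xs - b‖ = 0 := by
      have := sq_nonneg ‖B ws - K xs - b‖
      exact pow_eq_zero_iff (two_ne_zero) |>.1 (le_antisymm (by assumption) this)
    exact norm_eq_zero.1 h2
  have hBws : B ws = K xs + b := by
    rw [sub_sub, sub_eq_zero] at hr0; exact hr0
  have hxX : ∀ t, 1 ≤ t → x t ∈ X := by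
    intro t ht
    rcases Nat.exists_eq_add_of_le' ht with ⟨k, rfl⟩
    rcases Nat.eq_zero_or_pos k with rfl | hk
    · exact hx1
    · exact hxmem k hk
  set r : ℕ → 𝒴 := fun t => B (w t) - K (x t) - b with hr
  set Φ : 𝒴 → ℕ → ℝ := fun yv t => 1 / (2 * ρv) * ‖yv - y t‖ ^ 2 + ηv / 2 * ‖x t - xs‖ ^ 2
    + ρv / 2 * ‖r t + K (x t - xs)‖ ^ 2 - χ * ρv / 2 * ‖K (x t - xs)‖ ^ 2 with hΦ
  have step : ∀ yv : 𝒴, ∀ t, 1 ≤ t →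
      G (x (t+1)) + F (w (t+1)) - (G xs + F ws) - ⟪yv, r (t+1)⟫ ≤ Φ yv t - Φ yv (t+1) := by
    intro yv t ht
    have hmd : xmd t = x t := by rw [hxmd t ht, hαdef t ht]; simp
    have hX1 := hxstep t ht
    simp only [hmd, hθdef t ht, hηdef t ht] at hX1
    have hW1 := hwstep t ht
    simp only [hτdef t ht] at hW1
    have hA := aux_x X hXconv K (G' (x t)) (x t) (x (t+1)) xs (B (w t) - b) (r t) (y t)
      (χ * ρv) ((1 - χ) * ρv) ηv (hxmem t ht) hxs (by
        intro u hu
        have := hX1 u hu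
        rw [sub_right_comm (B (w t)) (K (x (t+1))) b, sub_right_comm (B (w t)) (K u) b] at this
        exact this)
    have hB := aux_w F hFconv B (w (t+1)) ws (K (x (t+1))) b (y t) ρv hW1
    have hS := hGsmooth (x t) (hxX t ht) (x (t+1)) (hxmem t ht)
    have hC := aux_grad G (G' (x t)) (x t) xs (hGgrad _) hGconv
    have hde : (x (t+1) - xs) - (x t - xs) = x (t+1) - x t := by abel
    have e1 : K (xs - x (t+1)) = - K (x (t+1) - xs) := by rw [← map_neg]; congr 1; abel
    have e2 : B (ws - w (t+1)) = - (r (t+1) + K (x (t+1) - xs)) := by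
      simp only [hr, map_sub, hBws]; abel
    have e3 : B (w t) - b - K (x (t+1)) = r t + K (x t - xs) - K (x (t+1) - xs) := by
      simp only [hr, map_sub]; abel
    have e4 : xs - x (t+1) = -(x (t+1) - xs) := by abel
    have e5 : x (t+1) - x t = (x (t+1) - xs) + (xs - x t) := by abel
    have e6 : ⟪G' (x t), x (t+1) - x t⟫ = ⟪G' (x t), x (t+1) - xs⟫ + ⟪G' (x t), xs - x t⟫ := by
      rw [e5, inner_add_right]
    rw [e1, e3, e4] at hA
    rw [e2] at hB
    rw [e6] at hS
    simp only [inner_neg_right] at hA hB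
    refine aux_core (x t - xs) (x (t+1) - xs) (K (x t - xs)) (K (x (t+1) - xs)) (r t) (r (t+1))
      (y t) (y (t+1)) yv _ ⟪G' (x t), x (t+1) - xs⟫ L_G ρv ηv χ ‖K‖ hχ hρv hηv ?_ ?_ ?_ ?_
    · rw [← map_sub, ← mul_pow]
      exact pow_le_pow_left₀ (norm_nonneg _) (K.le_opNorm _) 2
    · rw [hystep t ht, hρdef t ht]
    · rw [hde]; change _ ≤ _ at hB; linarith
    · rw [hde]; linarith
  have tele : ∀ yv : 𝒴, ∀ t, 1 ≤ t → ∑ i ∈ Finset.Icc 2 (t+1),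
      (G (x i) + F (w i) - (G xs + F ws) - ⟪yv, r i⟫) ≤ Φ yv 1 - Φ yv (t+1) := by
    intro yv t ht
    induction t, ht using Nat.le_induction with
    | base => simpa using step yv 1 le_rfl
    | succ n hn ih =>
      rw [Finset.sum_Icc_succ_top (by omega)]
      have := step yv (n+1) (by omega)
      linarith
  have ytel : ∀ t, 1 ≤ t → ρv • ∑ i ∈ Finset.Icc 2 (t+1), r i = - y (t+1) := by
    intro t ht
    induction t, ht using Nat.le_induction with
    | base => simp [hystep 1 le_rfl, hρdef 1 le_rfl, hy1, hr]
    | succ n hn ih =>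
      rw [Finset.sum_Icc_succ_top (by omega), smul_add, ih, hystep (n+1) (by omega),
        hρdef (n+1) (by omega)]
      simp only [hr]; abel
  have hΦ1 : ∀ yv, Φ yv 1 = 1 / (2 * ρv) * ‖yv - y 1‖ ^ 2 + ηv / 2 * ‖x 1 - xs‖ ^ 2
      + (1 - χ) * ρv / 2 * ‖K (x 1 - xs)‖ ^ 2 := by
    intro yv
    have : r 1 = 0 := by simp [hr, hw1]
    simp only [hΦ, this, zero_add]; ring
  have hχ0 : 0 ≤ χ ∧ χ ≤ 1 := by rcases hχ with h | h <;> rw [h] <;> norm_num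
  have hΦt : ∀ yv t, 1 / (2 * ρv) * ‖yv - y t‖ ^ 2 ≤ Φ yv t := by
    intro yv t
    have h1 : ‖K (x t - xs)‖ ^ 2 ≤ ‖K‖ ^ 2 * ‖x t - xs‖ ^ 2 := by
      rw [← mul_pow]; exact pow_le_pow_left₀ (norm_nonneg _) (K.le_opNorm _) 2
    have h2 := mul_le_mul_of_nonneg_left h1 (mul_nonneg hχ0.1 hρv.le)
    have h3 := mul_le_mul_of_nonneg_right hηv (sq_nonneg ‖x t - xs‖)
    have h4 : 0 ≤ L_G * ‖x t - xs‖ ^ 2 := by positivity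
    have h5 : 0 ≤ ρv / 2 * ‖r t + K (x t - xs)‖ ^ 2 := by positivity
    simp only [hΦ]
    linarith
  intro t ht
  have h0 : (0:ℝ) < t := by exact_mod_cast ht
  have hbar : B ((t : ℝ)⁻¹ • ∑ i ∈ Finset.Icc 2 (t + 1), w i)
      - K ((t : ℝ)⁻¹ • ∑ i ∈ Finset.Icc 2 (t + 1), x i) - b
      = (t:ℝ)⁻¹ • ∑ i ∈ Finset.Icc 2 (t+1), r i := by
    simp only [hr, Finset.sum_sub_distrib, map_smul, map_sum, smul_sub, Finset.sum_const]
    congr 1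
    rw [← Nat.cast_smul_eq_nsmul ℝ, smul_smul]
    simp [h0.ne']
  have hrsum : ∑ i ∈ Finset.Icc 2 (t+1), r i = -(ρv⁻¹ • y (t+1)) := by
    rw [← smul_neg, ← ytel t ht, smul_smul, inv_mul_cancel₀ hρv.ne', one_smul]
  constructor
  · have h1 := tele 0 t ht
    have hJG := aux_jensen G hGconv x t ht
    have hJF := aux_jensen F hFconv w t ht
    have h2 := hΦt 0 (t+1)
    have h3 : 0 ≤ 1 / (2 * ρv) * ‖0 - y (t+1)‖ ^ 2 := by positivity
    rw [hΦ1, hy1] at h1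
    simp only [inner_zero_left, sub_zero, Finset.sum_sub_distrib, Finset.sum_add_distrib,
      Finset.sum_const, norm_zero, Nat.card_Icc, nsmul_eq_mul] at h1
    have hc : ((t + 1 + 1 - 2 : ℕ) : ℝ) = t := by congr 1
    rw [hc] at h1
    rw [div_mul_eq_mul_div, le_div_iff₀ (by positivity)]
    nlinarith
  · have h1 := tele ys t ht
    have h2 := hΦt ys (t+1)
    have h3 : 0 ≤ ∑ i ∈ Finset.Icc 2 (t+1), (G (x i) + F (w i) - (G xs + F ws) - ⟪ys, r i⟫) := by
      apply Finset.sum_nonneg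
      intro i hi
      have := hsaddle₂ (w i) (x i) (hxX i (by have := (Finset.mem_Icc.1 hi).1; omega))
      rw [hr0, inner_zero_right] at this
      simp only [hr]; linarith
    rw [hΦ1] at h1
    rw [hbar, hrsum, hy1, zero_sub, norm_neg] at *
    rw [hy1, sub_zero] at h1
    have h4 : ‖y (t+1)‖ ^ 2 ≤ 2 * (‖ys‖ ^ 2 + ‖ys - y (t+1)‖ ^ 2) := by
      have := parallelogram_law_with_norm ℝ ys (ys - y (t+1))
      have e : ys - (ys - y (t+1)) = y (t+1) := by abel
      rw [e] at this
      nlinarith [sq_nonneg ‖ys + (ys - y (t+1))‖]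
    have h5 : ‖ys - y (t+1)‖ ^ 2 ≤ ‖ys‖ ^ 2 + ρv * (ηv * ‖x 1 - xs‖ ^ 2 + (1 - χ) * ρv * ‖K (x 1 - xs)‖ ^ 2) := by
      have h6 : 1 / (2 * ρv) * ‖ys - y (t+1)‖ ^ 2 ≤ 1 / (2 * ρv) * ‖ys‖ ^ 2 + ηv / 2 * ‖x 1 - xs‖ ^ 2
          + (1 - χ) * ρv / 2 * ‖K (x 1 - xs)‖ ^ 2 := by linarith
      have h7 := mul_le_mul_of_nonneg_left h6 (by positivity : 0 ≤ 2 * ρv)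
      have e1 : 2 * ρv * (1 / (2 * ρv) * ‖ys - y (t+1)‖ ^ 2) = ‖ys - y (t+1)‖ ^ 2 := by field_simp
      have e2 : 2 * ρv * (1 / (2 * ρv) * ‖ys‖ ^ 2) = ‖ys‖ ^ 2 := by field_simp
      rw [e1, mul_add, mul_add, e2] at h7
      linarith
    rw [norm_smul, norm_neg, norm_smul, norm_inv, norm_inv, Real.norm_of_nonneg h0.le, Real.norm_of_nonneg hρv.le]
    have e : 2 / (t:ℝ) ^ 2 * (2 * ‖ys‖ ^ 2 / ρv ^ 2 + ηv * ‖x 1 - xs‖ ^ 2 / ρv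
        + (1 - χ) * ‖K (x 1 - xs)‖ ^ 2) = ((t:ℝ)⁻¹ * ρv⁻¹) ^ 2 * (2 * (2 * ‖ys‖ ^ 2 +
          ρv * (ηv * ‖x 1 - xs‖ ^ 2 + (1 - χ) * ρv * ‖K (x 1 - xs)‖ ^ 2))) := by
      field_simp
      ring
    rw [e, ← mul_assoc, mul_pow]
    apply mul_le_mul_of_nonneg_left _ (by positivity)
    linarith
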